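/- arXiv:0804.2012 — 2 statements merged into one kernel-verified Lean document; each statement's English description precedes it below -/
import Mathlib

section
/- Let O be a Noetherian integrally closed domain with field of fractions F, let A be an O-algebra that is free and finitely generated as an O-module, let K be a finite Galois extension of F, and let O_K be the integral closure of O in K. The group Gal(K/F) acts on O_K ⊗_O A through the first factor. Then the map sending a Gal(K/F)-orbit of primitive idempotents of Z(O_K ⊗_O A) to the sum of its elements is a bijection from the set of Gal(K/F)-orbits of primitive idempotents of Z(O_K ⊗_O A) onto the set of primitive idempotents of Z(A) (where A is identified with its image O ⊗_O A ⊆ O_K ⊗_O A). -/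
open scoped TensorProduct

/-- A block of a ring: a primitive idempotent of the center, i.e. a nonzero central idempotent
which cannot be written as a sum of two nonzero orthogonal central idempotents. -/
def IsBlockIdempotent {A : Type*} [Ring A] (e : A) : Prop :=
  e ∈ Subring.center A ∧ IsIdempotentElem e ∧ e ≠ 0 ∧
    ∀ f g : A, f ∈ Subring.center A → g ∈ Subring.center A →
      IsIdempotentElem f → IsIdempotentElem g → f * g = 0 → e = f + g → f = 0 ∨ g = 0

variable (O : Type) [CommRing O] [IsDomain O] [IsNoetherianRing O] [IsIntegrallyClosed O]
  (F : Type) [Field F] [Algebra O F] [IsFractionRing O F]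
  (K : Type) [Field K] [Algebra F K] [FiniteDimensional F K] [IsGalois F K]
  [Algebra O K] [IsScalarTower O F K]
  (A : Type) [Ring A] [Algebra O A] [Module.Finite O A] [Module.Free O A]

/-- The semilinear action of `Gal(K/F)` on `O_K ⊗_O A` through the first factor, where
`O_K` is the integral closure of `O` in `K`: `σ(λ ⊗ a) = σ(λ) ⊗ a`. -/
noncomputable def galoisActOnTensor (σ : K ≃ₐ[F] K) :
    ((integralClosure O K) ⊗[O] A) ≃ₐ[O] ((integralClosure O K) ⊗[O] A) :=
  Algebra.TensorProduct.congr (galRestrict O F K (integralClosure O K) σ) AlgEquiv.refl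

/-- The `Gal(K/F)`-orbit of an element of `O_K ⊗_O A`. -/
noncomputable def galoisOrbit (e : (integralClosure O K) ⊗[O] A) :
    Set ((integralClosure O K) ⊗[O] A) :=
  Set.range fun σ : K ≃ₐ[F] K => galoisActOnTensor O F K A σ e

/-!
Let `B = O_K ⊗ A` and `G = Gal(K/F)`. For a block `e` and a central idempotent `f`, the product
`e * f` is `0` or `e`; hence distinct blocks are orthogonal, and the sum `E` of the `G`-orbit of
`e` is a `G`-fixed central idempotent. Taking `G`-invariants of the first factor commutes with the
flat base change to `A`, so the `G`-fixed elements of `B` are those of `A`; in particular `E ∈ A`.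
A `G`-fixed central idempotent that kills (resp. fixes) `e` kills (resp. fixes) its whole orbit, so
`E` is primitive in `A`. An orbit is recovered from its sum as the set of blocks not annihilated by
it. Finally, every block of `A` dominates a block of `B`, because `B` embeds into the
finite-dimensional algebra `K ⊗ A`, and it must then be the sum of the orbit of that block.
-/

open Function

section Blocks

variable {B C : Type*} [Ring B] [Ring C] {e f : B}

theorem isBlockIdempotent_iff :
    IsBlockIdempotent e ↔ e ∈ Subring.center B ∧ IsIdempotentElem e ∧ e ≠ 0 ∧
      ∀ f ∈ Subring.center B, IsIdempotentElem f → e * f = 0 ∨ e * f = e := by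
  refine and_congr_right fun he => and_congr_right fun he' => and_congr_right fun _ =>
    ⟨fun h f hf hf' => ?_, fun h f g hf _ hf' _ hfg hefg => ?_⟩
  · have hcomm (x : B) : x * e = e * x := Subring.mem_center_iff.mp he x
    have horth : e * f * (e * (1 - f)) = 0 := by
      rw [mul_assoc, ← mul_assoc f, hcomm, mul_assoc, hf'.mul_one_sub_self, mul_zero, mul_zero]
    refine (h (e * f) (e * (1 - f)) (mul_mem he hf) (mul_mem he (sub_mem (one_mem _) hf))
      (he'.mul_of_commute (hcomm f).symm hf')
      (he'.mul_of_commute (hcomm (1 - f)).symm hf'.one_sub) horth (by noncomm_ring)).imp_right ?_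
    rw [mul_sub, mul_one, sub_eq_zero]
    exact Eq.symm
  · have hgf : g * f = 0 := (Subring.mem_center_iff.mp hf g).trans hfg
    have hef : e * f = f := by rw [hefg, add_mul, hf'.eq, hgf, add_zero]
    rw [← hef]
    refine (h f hf hf').imp_right fun hefe => ?_
    rwa [← hef, hefe, left_eq_add] at hefg

namespace IsBlockIdempotent

theorem mem_center (he : IsBlockIdempotent e) : e ∈ Subring.center B := he.1

theorem isIdempotentElem (he : IsBlockIdempotent e) : IsIdempotentElem e := he.2.1

theorem ne_zero (he : IsBlockIdempotent e) : e ≠ 0 := he.2.2.1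

theorem mul_eq_zero_or_mul_eq_left (he : IsBlockIdempotent e) (hf : f ∈ Subring.center B)
    (hf' : IsIdempotentElem f) : e * f = 0 ∨ e * f = e :=
  (isBlockIdempotent_iff.mp he).2.2.2 f hf hf'

theorem eq_of_mul_ne_zero (he : IsBlockIdempotent e) (hf : IsBlockIdempotent f)
    (h : e * f ≠ 0) : e = f := by
  have hcomm : e * f = f * e := Subring.mem_center_iff.mp hf.mem_center e
  calc
    e = e * f := ((he.mul_eq_zero_or_mul_eq_left hf.mem_center hf.isIdempotentElem).resolve_left
      h).symm
    _ = f * e := hcomm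
    _ = f := (hf.mul_eq_zero_or_mul_eq_left he.mem_center he.isIdempotentElem).resolve_left
      (hcomm ▸ h)

theorem map_ringEquiv (φ : B ≃+* C) (he : IsBlockIdempotent e) : IsBlockIdempotent (φ e) := by
  refine isBlockIdempotent_iff.mpr ⟨MulEquivClass.apply_mem_center φ he.mem_center,
    he.isIdempotentElem.map φ, (map_ne_zero_iff φ φ.injective).mpr he.ne_zero, fun f hf hf' => ?_⟩
  obtain ⟨f, rfl⟩ := φ.surjective f
  rw [← map_mul, map_eq_zero_iff φ φ.injective, φ.injective.eq_iff]
  exact he.mul_eq_zero_or_mul_eq_left ((MulEquivClass.apply_mem_center_iff φ).mp hf)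
    (φ.injective ((map_mul φ f f).trans hf'))

end IsBlockIdempotent

-- A block dominated by `u` is a central idempotent `e ≤ u` whose image generates a minimal
-- left ideal among those generated by nonzero central idempotents below `u`.
theorem exists_isBlockIdempotent_mul_eq_left [IsArtinianRing C] (j : B →+* C) (hj : Injective j)
    {u : B} (hu : u ∈ Subring.center B) (hu' : IsIdempotentElem u) (hu0 : u ≠ 0) :
    ∃ e : B, IsBlockIdempotent e ∧ e * u = e := by
  obtain ⟨e, ⟨he, he', he0, heu⟩, hmin⟩ := exists_minimalFor_of_wellFoundedLT
    (fun e : B => e ∈ Subring.center B ∧ IsIdempotentElem e ∧ e ≠ 0 ∧ e * u = e)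
    (fun e => Ideal.span {j e}) ⟨u, hu, hu', hu0, hu'⟩
  refine ⟨e, isBlockIdempotent_iff.mpr ⟨he, he', he0, fun f hf hf' => ?_⟩, heu⟩
  have hcomm : e * f = f * e := Subring.mem_center_iff.mp hf e
  have hefef : IsIdempotentElem (e * f) := he'.mul_of_commute hcomm hf'
  refine or_iff_not_imp_left.mpr fun hef => ?_
  have hle : Ideal.span {j e} ≤ Ideal.span {j (e * f)} := by
    refine hmin ⟨mul_mem he hf, hefef, hef, ?_⟩ ?_
    · rw [hcomm, mul_assoc, heu]
    · rw [Ideal.span_singleton_le_iff_mem, Ideal.mem_span_singleton', hcomm, map_mul]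
      exact ⟨j f, rfl⟩
  obtain ⟨c, hc⟩ := Ideal.mem_span_singleton'.mp (hle (Ideal.mem_span_singleton_self _))
  apply hj
  calc
    j (e * f) = j e * j (e * f) := by rw [← map_mul, ← mul_assoc, he'.eq]
    _ = c * j (e * f * (e * f)) := by rw [← hc, mul_assoc, ← map_mul]
    _ = j e := by rw [hefef.eq, hc]

end Blocks

section OrbitSum

/-- The sum of the distinct elements of the orbit of `b`: unlike in `∑ g, g • b`, an element with
a nontrivial stabilizer is counted once. It has the junk value `0` when the orbit has infinitely
many nonzero elements. -/
noncomputable def orbitSum (G : Type*) {B : Type*} [Monoid G] [AddCommMonoid B] [MulAction G B]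
    (b : B) : B :=
  ∑ᶠ x ∈ MulAction.orbit G b, x

variable {G B : Type*} [Group G]

theorem smul_orbitSum [Finite G] [AddCommMonoid B] [DistribMulAction G B] (g : G) (b : B) :
    g • orbitSum G b = orbitSum G b := by
  calc
    g • orbitSum G b = ∑ᶠ x ∈ MulAction.orbit G b, g • x := smul_finsum_mem (Set.finite_range _)
    _ = ∑ᶠ x ∈ (g • ·) '' MulAction.orbit G b, x :=
      (finsum_mem_image (f := id) (MulAction.injective g).injOn).symm
    _ = orbitSum G b := by rw [Set.image_smul, MulAction.smul_orbit]; rfl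

variable [Ring B] [MulSemiringAction G B] {e f : B}

theorem orbitSum_mem_center (he : e ∈ Subring.center B) : orbitSum G e ∈ Subring.center B := by
  refine finsum_mem_induction (· ∈ Subring.center B) (zero_mem _) (fun _ _ => add_mem) ?_
  rintro _ ⟨g, rfl⟩
  exact MulEquivClass.apply_mem_center (MulSemiringAction.toRingEquiv G B g) he

theorem orbitSum_mul [Finite G] (e f : B) :
    orbitSum G e * f = ∑ᶠ x ∈ MulAction.orbit G e, x * f :=
  finsum_mem_mul' _ f (Set.finite_range _)

theorem mul_orbitSum [Finite G] (e f : B) :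
    e * orbitSum G f = ∑ᶠ x ∈ MulAction.orbit G f, e * x :=
  mul_finsum_mem' _ e (Set.finite_range _)

theorem orbitSum_mul_eq_zero [Finite G] (hf : ∀ g : G, g • f = f) (hef : e * f = 0) :
    orbitSum G e * f = 0 := by
  rw [orbitSum_mul]
  refine finsum_mem_eq_zero_of_forall_eq_zero ?_
  rintro _ ⟨g, rfl⟩
  simpa [smul_mul', hf] using congr(g • $hef)

theorem orbitSum_mul_eq_self [Finite G] (hf : ∀ g : G, g • f = f) (hef : e * f = e) :
    orbitSum G e * f = orbitSum G e := by
  rw [orbitSum_mul]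
  refine finsum_mem_congr rfl ?_
  rintro _ ⟨g, rfl⟩
  simpa [smul_mul', hf] using congr(g • $hef)

namespace IsBlockIdempotent

theorem smul (g : G) (he : IsBlockIdempotent e) : IsBlockIdempotent (g • e) :=
  he.map_ringEquiv (MulSemiringAction.toRingEquiv G B g)

theorem eq_of_mem_orbit_of_mul_ne_zero (he : IsBlockIdempotent e) (hf : IsBlockIdempotent f)
    {x : B} (hx : x ∈ MulAction.orbit G f) (h : e * x ≠ 0) : e = x := by
  obtain ⟨g, rfl⟩ := hx
  exact he.eq_of_mul_ne_zero (hf.smul g) h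

theorem mul_orbitSum_self [Finite G] (he : IsBlockIdempotent e) : e * orbitSum G e = e := by
  calc
    e * orbitSum G e = ∑ᶠ x ∈ MulAction.orbit G e, e * x := mul_orbitSum e e
    _ = ∑ᶠ x ∈ ({e} : Set B), e * x := by
      refine finsum_mem_inter_support_eq' _ _ _ fun x hx => ⟨fun hxe => ?_, ?_⟩
      · exact (he.eq_of_mem_orbit_of_mul_ne_zero he hxe hx).symm
      · rintro rfl
        exact MulAction.mem_orbit_self x
    _ = e := by rw [finsum_mem_singleton, he.isIdempotentElem.eq]

theorem isIdempotentElem_orbitSum [Finite G] (he : IsBlockIdempotent e) :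
    IsIdempotentElem (orbitSum G e) :=
  orbitSum_mul_eq_self (fun g => smul_orbitSum g e) he.mul_orbitSum_self

theorem orbit_eq_of_orbitSum_eq [Finite G] (he : IsBlockIdempotent e) (hf : IsBlockIdempotent f)
    (h : orbitSum G e = orbitSum G f) : MulAction.orbit G e = MulAction.orbit G f := by
  have hsum : ∑ᶠ x ∈ MulAction.orbit G f, e * x ≠ 0 := by
    rw [← mul_orbitSum, ← h, he.mul_orbitSum_self]
    exact he.ne_zero
  obtain ⟨x, hx, hex⟩ := exists_ne_zero_of_finsum_mem_ne_zero hsum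
  rwa [MulAction.orbit_eq_iff, he.eq_of_mem_orbit_of_mul_ne_zero hf hx hex]

end IsBlockIdempotent

end OrbitSum

section Descent

variable {G A B : Type*} [Group G] [Finite G] [Ring A] [Ring B] [MulSemiringAction G B]
  {ι : A →+* B} {e : B}

theorem IsBlockIdempotent.exists_map_eq_orbitSum (hι : Injective ι)
    (hcenter : ∀ a ∈ Subring.center A, ι a ∈ Subring.center B)
    (hfixed : Set.range ι = MulAction.fixedPoints G B) (he : IsBlockIdempotent e) :
    ∃ E : A, IsBlockIdempotent E ∧ ι E = orbitSum G e := by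
  have hsmul (a : A) (g : G) : g • ι a = ι a := hfixed.subset (Set.mem_range_self a) g
  obtain ⟨E, hE⟩ : orbitSum G e ∈ Set.range ι := hfixed ▸ fun g => smul_orbitSum g e
  refine ⟨E, isBlockIdempotent_iff.mpr ⟨?_, ?_, ?_, fun f hf hf' => ?_⟩, hE⟩
  · refine Subring.mem_center_iff.mpr fun a => hι ?_
    rw [map_mul, map_mul, hE]
    exact Subring.mem_center_iff.mp (orbitSum_mem_center he.mem_center) (ι a)
  · apply hι
    rw [map_mul, hE, he.isIdempotentElem_orbitSum.eq]
  · rintro rfl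
    apply he.ne_zero
    rw [← he.mul_orbitSum_self (G := G), ← hE, map_zero, mul_zero]
  · rw [← map_eq_zero_iff ι hι, ← hι.eq_iff, map_mul, hE]
    exact (he.mul_eq_zero_or_mul_eq_left (hcenter f hf) (hf'.map ι)).imp
      (orbitSum_mul_eq_zero (hsmul f)) (orbitSum_mul_eq_self (hsmul f))

theorem IsBlockIdempotent.map_eq_orbitSum_of_mul_eq_left (hι : Injective ι)
    (hcenter : ∀ a ∈ Subring.center A, ι a ∈ Subring.center B)
    (hfixed : Set.range ι = MulAction.fixedPoints G B) (he : IsBlockIdempotent e) {E : A}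
    (hE : IsBlockIdempotent E) (heE : e * ι E = e) : ι E = orbitSum G e := by
  obtain ⟨E', hE', hsum⟩ := he.exists_map_eq_orbitSum hι hcenter hfixed
  have hmul : E' * E = E' := by
    apply hι
    rw [map_mul, hsum]
    exact orbitSum_mul_eq_self (hfixed.subset (Set.mem_range_self E)) heE
  rw [← hsum, hE'.eq_of_mul_ne_zero hE (hmul.symm ▸ hE'.ne_zero)]

end Descent

section BaseChange

variable {R S : Type*} [CommRing R] [CommRing S] [Algebra R S]

theorem piLeft_rTensor_pi {ι : Type*} [Fintype ι] [DecidableEq ι] {M A : Type*} {N : ι → Type*}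
    [AddCommGroup M] [Module R M] [AddCommGroup A] [Module R A] [∀ i, AddCommGroup (N i)]
    [∀ i, Module R (N i)] (f : ∀ i, M →ₗ[R] N i) (b : M ⊗[R] A) (i : ι) :
    TensorProduct.piLeft R A N ((LinearMap.pi f).rTensor A b) i = (f i).rTensor A b := by
  induction b with
  | zero => simp
  | add x y hx hy => rw [map_add, map_add, Pi.add_apply, hx, hy, map_add]
  | tmul m a => simp

-- By flatness, tensoring with `A` preserves the exactness of `R → S → ι → S`, where the second
-- map is `s ↦ (φ i s - s)ᵢ`.
theorem range_includeRight_eq_of_flat {ι A : Type*} [Finite ι] [Ring A] [Algebra R A]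
    [Module.Flat R A] (φ : ι → S →ₐ[R] S)
    (hφ : ∀ s, (∀ i, φ i s = s) → s ∈ Set.range (algebraMap R S)) :
    Set.range (Algebra.TensorProduct.includeRight : A →ₐ[R] S ⊗[R] A) =
      {b | ∀ i, Algebra.TensorProduct.map (φ i) (AlgHom.id R A) b = b} := by
  classical
  have := Fintype.ofFinite ι
  let d : S →ₗ[R] ι → S := LinearMap.pi fun i => (φ i).toLinearMap - LinearMap.id
  have hexact : Exact (Algebra.linearMap R S) d := fun s => by
    simp only [d, funext_iff, LinearMap.pi_apply, LinearMap.sub_apply, AlgHom.toLinearMap_apply,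
      LinearMap.id_apply, Pi.zero_apply, sub_eq_zero, Algebra.coe_linearMap]
    refine ⟨hφ s, ?_⟩
    rintro ⟨r, rfl⟩ i
    exact (φ i).commutes r
  have hrange : Set.range (Algebra.TensorProduct.includeRight : A →ₐ[R] S ⊗[R] A) =
      Set.range ((Algebra.linearMap R S).rTensor A) := by
    rw [← (TensorProduct.lid R A).symm.surjective.range_comp]
    congr 1
    ext a
    simp
  ext b
  rw [hrange, ← Module.Flat.rTensor_exact A hexact b,
    ← (TensorProduct.piLeft R A fun _ => S).map_eq_zero_iff, funext_iff]
  simp only [d, piLeft_rTensor_pi, LinearMap.rTensor_sub, LinearMap.rTensor_id,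
    LinearMap.sub_apply, LinearMap.id_apply, Pi.zero_apply, sub_eq_zero]
  rfl

theorem exists_algebraMap_eq_of_forall_galRestrict_eq (F K : Type*) [Field F] [Algebra R F]
    [IsFractionRing R F] [Field K] [Algebra F K] [FiniteDimensional F K] [IsGalois F K]
    [Algebra R K] [IsScalarTower R F K] [IsIntegrallyClosed R] [Algebra S K]
    [IsScalarTower R S K] [IsIntegralClosure S R K] {s : S}
    (hs : ∀ σ : Gal(K/F), galRestrict R F K S σ s = s) : ∃ r, algebraMap R S r = s := by
  have : IsDomain R := (IsFractionRing.injective R F).isDomain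
  have : IsDomain S := (IsIntegralClosure.algebraMap_injective S R K).isDomain
  have : IsFractionRing S K := IsIntegralClosure.isFractionRing_of_finite_extension R F K S
  refine (Algebra.isInvariant_of_isGalois' R F K S).isInvariant s fun τ => ?_
  obtain ⟨σ, rfl⟩ := (galRestrict R F K S).surjective τ
  exact hs σ

variable (S) in
theorem isArtinianRing_tensorProduct (T A : Type*) [CommRing T] [IsArtinianRing T] [Algebra S T]
    [Algebra R T] [IsScalarTower R S T] [Ring A] [Algebra R A] [Module.Finite S (S ⊗[R] A)] :
    IsArtinianRing (T ⊗[R] A) := by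
  have : Module.Finite T (T ⊗[R] A) :=
    Module.Finite.equiv (TensorProduct.AlgebraTensorModule.cancelBaseChange R S T T A)
  exact IsArtinianRing.of_finite T _

end BaseChange

section Galois

omit [IsDomain O] [IsNoetherianRing O] [IsIntegrallyClosed O] [FiniteDimensional F K]
  [Module.Finite O A] [Module.Free O A]

/-- The Galois action `galoisActOnTensor` as an action by ring automorphisms, so that
`MulAction.orbit` is `galoisOrbit`. -/
noncomputable abbrev galoisMulSemiringAction :
    MulSemiringAction Gal(K/F) (integralClosure O K ⊗[O] A) :=
  MulSemiringAction.compHom _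
    { toFun := galoisActOnTensor O F K A
      map_one' := by
        rw [galoisActOnTensor, map_one]
        exact Algebra.TensorProduct.congr_refl
      map_mul' := fun σ τ => by
        rw [galoisActOnTensor, map_mul]
        exact Algebra.TensorProduct.congr_trans _ _ AlgEquiv.refl AlgEquiv.refl :
      Gal(K/F) →* (integralClosure O K ⊗[O] A ≃ₐ[O] integralClosure O K ⊗[O] A) }

variable [IsIntegrallyClosed O] [FiniteDimensional F K] [Module.Flat O A]

theorem range_includeRight_eq_fixedPoints :
    letI := galoisMulSemiringAction O F K A
    Set.range (Algebra.TensorProduct.includeRight : A →ₐ[O] integralClosure O K ⊗[O] A) =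
      MulAction.fixedPoints Gal(K/F) (integralClosure O K ⊗[O] A) :=
  range_includeRight_eq_of_flat
    (fun σ : Gal(K/F) => (galRestrict O F K (integralClosure O K) σ).toAlgHom)
    fun _ => exists_algebraMap_eq_of_forall_galRestrict_eq F K

theorem galois_orbit_sum_bijection_on_blocks_general [Module.Finite F (F ⊗[O] A)] :
    (∀ e : (integralClosure O K) ⊗[O] A, IsBlockIdempotent e →
      ∃ E : A, IsBlockIdempotent E ∧
        (Algebra.TensorProduct.includeRight E : (integralClosure O K) ⊗[O] A) =
          ∑ᶠ x ∈ galoisOrbit O F K A e, x) ∧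
    (∀ e e' : (integralClosure O K) ⊗[O] A, IsBlockIdempotent e → IsBlockIdempotent e' →
      (∑ᶠ x ∈ galoisOrbit O F K A e, x) = (∑ᶠ x ∈ galoisOrbit O F K A e', x) →
      galoisOrbit O F K A e = galoisOrbit O F K A e') ∧
    (∀ E : A, IsBlockIdempotent E →
      ∃ e : (integralClosure O K) ⊗[O] A, IsBlockIdempotent e ∧
        (Algebra.TensorProduct.includeRight E : (integralClosure O K) ⊗[O] A) =
          ∑ᶠ x ∈ galoisOrbit O F K A e, x) := by
  let := galoisMulSemiringAction O F K A
  let ι : A →+* integralClosure O K ⊗[O] A := Algebra.TensorProduct.includeRight.toRingHom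
  let j : integralClosure O K ⊗[O] A →+* K ⊗[O] A :=
    (Algebra.TensorProduct.map (integralClosure O K).val (AlgHom.id O A)).toRingHom
  have hι : Injective ι := by
    have : FaithfulSMul O K := FaithfulSMul.trans O F K
    exact Algebra.TensorProduct.includeRight_injective <|
      .of_comp (f := algebraMap _ K) (FaithfulSMul.algebraMap_injective O K)
  have hj : Injective j := Module.Flat.rTensor_preserves_injective_linearMap
    (integralClosure O K).val.toLinearMap Subtype.val_injective
  have hcenter (a : A) (ha : a ∈ Subring.center A) : ι a ∈ Subring.center _ :=
    Algebra.TensorProduct.includeRight_map_center_le O _ A ⟨a, ha, rfl⟩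
  have hfixed := range_includeRight_eq_fixedPoints O F K A
  have : IsArtinianRing (K ⊗[O] A) := isArtinianRing_tensorProduct F K A
  refine ⟨fun e he => he.exists_map_eq_orbitSum hι hcenter hfixed,
    fun e e' he he' => he.orbit_eq_of_orbitSum_eq he', fun E hE => ?_⟩
  obtain ⟨e, he, heE⟩ := exists_isBlockIdempotent_mul_eq_left j hj (hcenter E hE.mem_center)
    (hE.isIdempotentElem.map ι) ((map_ne_zero_iff ι hι).mpr hE.ne_zero)
  exact ⟨e, he, he.map_eq_orbitSum_of_mul_eq_left hι hcenter hfixed hE heE⟩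

end Galois

/-- Let `O` be a Noetherian integrally closed domain with field of fractions
`F`, `A` an `O`-algebra free and finitely generated as an `O`-module, `K/F` a finite Galois
extension and `O_K` the integral closure of `O` in `K`. The map sending a `Gal(K/F)`-orbit of
primitive idempotents of `Z(O_K ⊗_O A)` to the sum of its elements is a bijection from the set
of such orbits onto the set of primitive idempotents of `Z(A)` (where `A` is identified with
its image `O ⊗_O A ⊆ O_K ⊗_O A`). -/
theorem galois_orbit_sum_bijection_on_blocks :
    (∀ e : (integralClosure O K) ⊗[O] A, IsBlockIdempotent e →
      ∃ E : A, IsBlockIdempotent E ∧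
        (Algebra.TensorProduct.includeRight E : (integralClosure O K) ⊗[O] A) =
          ∑ᶠ x ∈ galoisOrbit O F K A e, x) ∧
    (∀ e e' : (integralClosure O K) ⊗[O] A, IsBlockIdempotent e → IsBlockIdempotent e' →
      (∑ᶠ x ∈ galoisOrbit O F K A e, x) = (∑ᶠ x ∈ galoisOrbit O F K A e', x) →
      galoisOrbit O F K A e = galoisOrbit O F K A e') ∧
    (∀ E : A, IsBlockIdempotent E →
      ∃ e : (integralClosure O K) ⊗[O] A, IsBlockIdempotent e ∧
        (Algebra.TensorProduct.includeRight E : (integralClosure O K) ⊗[O] A) =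
          ∑ᶠ x ∈ galoisOrbit O F K A e, x) :=
  galois_orbit_sum_bijection_on_blocks_general O F K A
end

section
/- Let d ≥ 2, let m = (m^{(0)}, …, m^{(d−1)}) ∈ ℤ^d be a weight system, and let λ, μ be d-partitions of r with λ ∼_C μ. Then the m-charged contents of λ and μ are equal as multisets: Contc_λ = Contc_μ. -/
/-- The β-number of a partition `λ = (λ₁ ≥ … ≥ λ_h)` (given as a list), namely the list
`(λ₁ + h - 1, λ₂ + h - 2, …, λ_h + h - h)`. -/
def betaNumber (l : List ℕ) : List ℕ :=
  l.mapIdx fun i a => a + l.length - (i + 1)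

/-- The `m`-shifted sequence `β[m] = (β₁ + m, …, β_h + m, m - 1, m - 2, …, 1, 0)`. -/
def shiftedBeta (β : List ℕ) (m : ℕ) : List ℕ :=
  β.map (· + m) ++ (List.range m).reverse

/-- A list of natural numbers is a partition if it is weakly decreasing and its entries are
positive. -/
def IsPartitionList (l : List ℕ) : Prop :=
  l.Pairwise (· ≥ ·) ∧ ∀ x ∈ l, 0 < x

/-- A `d`-partition of `r`: a `d`-tuple of partitions whose sizes sum to `r`. -/
def IsMultipartitionOf (d r : ℕ) (lam : Fin d → List ℕ) : Prop :=
  (∀ a, IsPartitionList (lam a)) ∧ (∑ a, (lam a).sum) = r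

/-- The `m`-charged height `hc_λ := max_a (h_{λ^{(a)}} - m^{(a)})` of a `d`-partition `λ`
with respect to the weight system `m`. -/
def chargedHeight {d : ℕ} [NeZero d] (m : Fin d → ℤ) (lam : Fin d → List ℕ) : ℤ :=
  Finset.univ.sup' Finset.univ_nonempty fun a => ((lam a).length : ℤ) - m a

/-- The `m`-charged content of a `d`-partition `λ`: the multiset union of the entries of the
rows `Bc_λ^{(a)} = β_{λ^{(a)}}[hc_λ - hc_λ^{(a)}]` of the `m`-charged standard symbol. -/
def chargedContent {d : ℕ} [NeZero d] (m : Fin d → ℤ) (lam : Fin d → List ℕ) : Multiset ℕ :=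
  ∑ a : Fin d,
    (↑(shiftedBeta (betaNumber (lam a))
        ((chargedHeight m lam - (((lam a).length : ℤ) - m a)).toNat)) : Multiset ℕ)

/-- The relation `λ ∼_C μ` on `d`-partitions: there are `s < t` such that `λ` and `μ` agree
away from `s, t`, and the 2-partitions `(λ^{(s)}, λ^{(t)})` and `(μ^{(s)}, μ^{(t)})` have the
same charged content with respect to the weight system `(m^{(s)}, m^{(t)})`. -/
def SimC {d : ℕ} [NeZero d] (m : Fin d → ℤ) (lam mu : Fin d → List ℕ) : Prop :=
  ∃ s t : Fin d, s < t ∧ (∀ a, a ≠ s → a ≠ t → lam a = mu a) ∧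
    chargedContent ![m s, m t] ![lam s, lam t] = chargedContent ![m s, m t] ![mu s, mu t]

/-!
A charged content determines the height at which its symbol is drawn, because all symbols drawn at
height `N` have `d * N + ∑ a, m a` entries. Hence changing some rows of a symbol without changing
their joint charged content preserves the charged height of the whole. Redrawing those rows at that
larger height only translates their joint content and adds copies of an initial segment of `ℕ`, so
their contribution to the full content is unchanged as well.
-/

theorem comp_vecCons_pair {α β : Type*} (g : α → β) (x y : α) : g ∘ ![x, y] = ![g x, g y] :=
  (FinVec.map_eq g ![x, y]).symm

theorem coe_shiftedBeta (β : List ℕ) (n : ℕ) :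
    (shiftedBeta β n : Multiset ℕ) = (β : Multiset ℕ).map (· + n) + Multiset.range n := by
  rw [shiftedBeta, ← Multiset.coe_add, Multiset.coe_reverse, Multiset.coe_range, Multiset.map_coe]

theorem coe_shiftedBeta_add (β : List ℕ) (n k : ℕ) :
    (shiftedBeta β (n + k) : Multiset ℕ) =
      (shiftedBeta β n : Multiset ℕ).map (· + k) + Multiset.range k := by
  have hrange : Multiset.range (n + k) = (Multiset.range n).map (· + k) + Multiset.range k := by
    simp_rw [add_comm _ k, Multiset.range_add, add_comm]
  simp only [coe_shiftedBeta, hrange, Multiset.map_add, Multiset.map_map, Function.comp_def,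
    add_assoc]

/-- The row of the standard symbol belonging to a component `l` of weight `m`, when the symbol is
drawn at charged height `N`. Keeping `N` independent of the multipartition allows rows of
different symbols to be compared; `N` should be at least the charged height `l.length - m`, since
`Int.toNat` truncates the shift to zero below it. -/
def symbolRow (N m : ℤ) (l : List ℕ) : Multiset ℕ :=
  shiftedBeta (betaNumber l) (N - (l.length - m)).toNat

theorem symbolRow_add {N m : ℤ} {l : List ℕ} (h : l.length - m ≤ N) (k : ℕ) :
    symbolRow (N + k) m l = (symbolRow N m l).map (· + k) + Multiset.range k := by
  have hshift : (N + k - (l.length - m)).toNat = (N - (l.length - m)).toNat + k := by omega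
  rw [symbolRow, hshift, coe_shiftedBeta_add, symbolRow]

theorem card_symbolRow {N m : ℤ} {l : List ℕ} (h : l.length - m ≤ N) :
    ((symbolRow N m l).card : ℤ) = N + m := by
  simp only [symbolRow, shiftedBeta, betaNumber, Multiset.coe_card, List.length_append,
    List.length_map, List.length_mapIdx, List.length_reverse, List.length_range]
  omega

section Multipartition

variable {d k : ℕ} [NeZero d] [NeZero k] {m : Fin d → ℤ} {lam mu : Fin d → List ℕ}

theorem chargedHeight_le_iff {x : ℤ} :
    chargedHeight m lam ≤ x ↔ ∀ a, (lam a).length - m a ≤ x := by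
  simp [chargedHeight]

theorem length_sub_le_chargedHeight (m : Fin d → ℤ) (lam : Fin d → List ℕ) (a : Fin d) :
    (lam a).length - m a ≤ chargedHeight m lam :=
  chargedHeight_le_iff.1 le_rfl a

theorem chargedContent_eq_sum_symbolRow (m : Fin d → ℤ) (lam : Fin d → List ℕ) :
    chargedContent m lam = ∑ a, symbolRow (chargedHeight m lam) (m a) (lam a) :=
  rfl

theorem card_chargedContent (m : Fin d → ℤ) (lam : Fin d → List ℕ) :
    ((chargedContent m lam).card : ℤ) = d * chargedHeight m lam + ∑ a, m a := by
  simp [chargedContent_eq_sum_symbolRow, card_symbolRow (length_sub_le_chargedHeight m lam _),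
    Finset.sum_add_distrib]

theorem chargedHeight_eq_of_chargedContent_eq (h : chargedContent m lam = chargedContent m mu) :
    chargedHeight m lam = chargedHeight m mu := by
  have hcard : (d : ℤ) * chargedHeight m lam + ∑ a, m a = d * chargedHeight m mu + ∑ a, m a := by
    rw [← card_chargedContent, ← card_chargedContent, h]
  exact mul_left_cancel₀ (Nat.cast_ne_zero.2 (NeZero.ne d)) (add_right_cancel hcard)

theorem sum_symbolRow_chargedHeight_add (m : Fin d → ℤ) (lam : Fin d → List ℕ) (n : ℕ) :
    ∑ a, symbolRow (chargedHeight m lam + n) (m a) (lam a) =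
      (chargedContent m lam).map (· + n) + d • Multiset.range n := by
  simp_rw [symbolRow_add (length_sub_le_chargedHeight m lam _)]
  rw [Finset.sum_add_distrib, Fin.sum_const, chargedContent_eq_sum_symbolRow,
    ← Multiset.coe_mapAddMonoidHom, map_sum]

theorem sum_symbolRow_eq_of_chargedContent_eq (h : chargedContent m lam = chargedContent m mu)
    {N : ℤ} (hN : chargedHeight m lam ≤ N) :
    ∑ a, symbolRow N (m a) (lam a) = ∑ a, symbolRow N (m a) (mu a) := by
  obtain ⟨n, rfl⟩ := Int.le.dest hN
  rw [sum_symbolRow_chargedHeight_add, h, chargedHeight_eq_of_chargedContent_eq h,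
    sum_symbolRow_chargedHeight_add]

theorem chargedHeight_comp_le (m : Fin d → ℤ) (lam : Fin d → List ℕ) (f : Fin k → Fin d) :
    chargedHeight (m ∘ f) (lam ∘ f) ≤ chargedHeight m lam :=
  chargedHeight_le_iff.2 fun i => length_sub_le_chargedHeight m lam (f i)

variable {f : Fin k → Fin d}

theorem chargedHeight_le_of_comp_le (hagree : ∀ a ∉ Set.range f, lam a = mu a)
    (hle : chargedHeight (m ∘ f) (lam ∘ f) ≤ chargedHeight (m ∘ f) (mu ∘ f)) :
    chargedHeight m lam ≤ chargedHeight m mu := by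
  refine chargedHeight_le_iff.2 fun a => ?_
  by_cases ha : a ∈ Set.range f
  · obtain ⟨i, rfl⟩ := ha
    calc ((lam (f i)).length : ℤ) - m (f i)
        ≤ chargedHeight (m ∘ f) (lam ∘ f) := length_sub_le_chargedHeight (m ∘ f) (lam ∘ f) i
      _ ≤ chargedHeight (m ∘ f) (mu ∘ f) := hle
      _ ≤ chargedHeight m mu := chargedHeight_comp_le m mu f
  · rw [hagree a ha]
    exact length_sub_le_chargedHeight m mu a

theorem chargedHeight_eq_of_comp_eq (hagree : ∀ a ∉ Set.range f, lam a = mu a)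
    (heq : chargedHeight (m ∘ f) (lam ∘ f) = chargedHeight (m ∘ f) (mu ∘ f)) :
    chargedHeight m lam = chargedHeight m mu :=
  le_antisymm (chargedHeight_le_of_comp_le hagree heq.le)
    (chargedHeight_le_of_comp_le (fun a ha => (hagree a ha).symm) heq.ge)

theorem chargedContent_eq_of_simC_general (hf : f.Injective)
    (hagree : ∀ a ∉ Set.range f, lam a = mu a)
    (hcontent : chargedContent (m ∘ f) (lam ∘ f) = chargedContent (m ∘ f) (mu ∘ f)) :
    chargedContent m lam = chargedContent m mu := by
  have hheight : chargedHeight m lam = chargedHeight m mu :=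
    chargedHeight_eq_of_comp_eq hagree (chargedHeight_eq_of_chargedContent_eq hcontent)
  rw [chargedContent_eq_sum_symbolRow, chargedContent_eq_sum_symbolRow, ← hheight,
    ← Finset.sum_add_sum_compl (Finset.univ.image f),
    ← Finset.sum_add_sum_compl (Finset.univ.image f),
    Finset.sum_image hf.injOn, Finset.sum_image hf.injOn]
  congr 1
  · exact sum_symbolRow_eq_of_chargedContent_eq hcontent (chargedHeight_comp_le m lam f)
  · refine Finset.sum_congr rfl fun a ha => ?_
    rw [hagree a (by simpa using ha)]

end Multipartition

/-- Let `d ≥ 2`, let `m ∈ ℤ^d` be a weight system, and let `λ, μ` be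
`d`-partitions of `r` with `λ ∼_C μ`. Then the `m`-charged contents of `λ` and `μ` are equal
as multisets. -/
theorem chargedContent_eq_of_simC (d r : ℕ) (hd : 2 ≤ d) [NeZero d] (m : Fin d → ℤ)
    (lam mu : Fin d → List ℕ)
    (hlam : IsMultipartitionOf d r lam) (hmu : IsMultipartitionOf d r mu)
    (h : SimC m lam mu) :
    chargedContent m lam = chargedContent m mu := by
  obtain ⟨s, t, hst, hagree, hcontent⟩ := h
  refine chargedContent_eq_of_simC_general (f := ![s, t]) (by simp [hst.ne]) ?_ ?_
  · exact fun a ha => hagree a (fun has => ha ⟨0, has.symm⟩) fun hat => ha ⟨1, hat.symm⟩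
  · simpa only [comp_vecCons_pair] using hcontent
end
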